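/- arXiv:1501.00248 — 3 statements merged into one kernel-verified Lean document; each statement's English description precedes it below -/
import Mathlib

section
/- Let g ≥ 2 be an integer and K a field. For 1 ≤ i < j ≤ g let H_{ij} := {x ∈ K^g : x_i = x_j}. Let S be a nonempty set of pairs (i,j) with 1 ≤ i < j ≤ g and let W := ⋂_{(i,j)∈S} H_{ij} be the corresponding linear subspace of K^g, with codimension r := g − dim_K W. Then the number of pairs (i,j), 1 ≤ i < j ≤ g, such that W ⊆ H_{ij} is at most r·(r+1)/2. -/
/-!
Write `i ~ j` when `x i = x j` for all `x ∈ W`; this is an equivalence relation on the coordinates,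
and `W ⊆ H_{ij}` means `i ~ j`. Let `N` be the set of coordinates that are not the least element
of their class. A vector of `W` is determined by its coordinates outside `N`, so
`dim W ≤ g - |N|`, i.e. `|N| ≤ r` (`card_nonleast_add_finrank_le`).

If `i < j` and `i ~ j`, then `j ∈ N`, while `i` is either in `N` or the least element of the class
of `j`. Sending `(i, j)` to the unordered pair `{i, j}` in the first case and to `{j, j}` in the
second is therefore an injection into the unordered pairs, repetition allowed, of elements of `N`
(`ncard_pairs_le`), and there are `|N| (|N| + 1) / 2` of these.
-/

/-- The diagonal hyperplane `{x ∈ K^g : x i = x j}` of the braid arrangement,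
as a linear subspace of `K^g`. -/
def braidHyperplane (K : Type*) [Field K] (g : ℕ) (i j : Fin g) :
    Submodule K (Fin g → K) :=
  LinearMap.ker ((LinearMap.proj i : (Fin g → K) →ₗ[K] K) - LinearMap.proj j)

theorem le_braidHyperplane_iff {K : Type*} [Field K] {g : ℕ} (W : Submodule K (Fin g → K))
    (i j : Fin g) : W ≤ braidHyperplane K g i j ↔ ∀ x ∈ W, x i = x j := by
  simp [braidHyperplane, SetLike.le_def, LinearMap.mem_ker, sub_eq_zero]

open Classical in
/-- The coordinates `j` that are not the least element of their class, where `i` and `j` are in the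
same class if `W` is contained in the hyperplane `x i = x j`. -/
noncomputable def nonleast {K : Type*} [Field K] {g : ℕ} (W : Submodule K (Fin g → K)) :
    Finset (Fin g) :=
  {j | ∃ i < j, ∀ x ∈ W, x i = x j}

theorem mem_nonleast {K : Type*} [Field K] {g : ℕ} {W : Submodule K (Fin g → K)} {j : Fin g} :
    j ∈ nonleast W ↔ ∃ i < j, ∀ x ∈ W, x i = x j := by
  simp [nonleast]

/-- Restriction to the coordinates outside `nonleast W` is injective on `W`. -/
theorem card_nonleast_add_finrank_le {K : Type*} [Field K] {g : ℕ}
    (W : Submodule K (Fin g → K)) : (nonleast W).card + Module.finrank K W ≤ g := by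
  let f : W →ₗ[K] ({j // j ∉ nonleast W} → K) :=
    (LinearMap.funLeft K K Subtype.val).comp W.subtype
  have hf : Function.Injective f := by
    rw [← LinearMap.ker_eq_bot, LinearMap.ker_eq_bot']
    rintro ⟨x, hx⟩ h0
    have key : ∀ j, x j = 0 := by
      intro j
      induction j using WellFoundedLT.induction with
      | ind j ih =>
        by_cases hj : j ∈ nonleast W
        · obtain ⟨i, hij, h⟩ := mem_nonleast.1 hj
          rw [← h x hx, ih i hij]
        · exact congrFun h0 ⟨j, hj⟩
    exact Subtype.ext (funext key)
  have h := LinearMap.finrank_le_finrank_of_injective hf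
  rw [Module.finrank_fintype_fun_eq_card, Fintype.card_subtype_compl, Fintype.card_fin,
    Fintype.card_coe] at h
  have hN : (nonleast W).card ≤ g := by simpa using (nonleast W).card_le_univ
  omega

/-- The pairs `i < j` in a common class inject into the unordered pairs from `nonleast W`, by
`(i, j) ↦ {i, j}` if `i ∈ nonleast W` and `(i, j) ↦ {j, j}` otherwise. -/
theorem ncard_pairs_le {K : Type*} [Field K] {g : ℕ} (W : Submodule K (Fin g → K)) :
    {p : Fin g × Fin g | p.1 < p.2 ∧ ∀ x ∈ W, x p.1 = x p.2}.ncard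
      ≤ ((nonleast W).card + 1).choose 2 := by
  rw [← Finset.card_sym2, ← Set.ncard_coe_finset]
  refine Set.ncard_le_ncard_of_injOn
    (fun p => if p.1 ∈ nonleast W then s(p.1, p.2) else s(p.2, p.2)) ?_ ?_ (Set.toFinite _)
  · rintro ⟨i, j⟩ ⟨hij, h⟩
    have hj : j ∈ nonleast W := mem_nonleast.2 ⟨i, hij, h⟩
    by_cases hi : i ∈ nonleast W <;> simp [hi, hj]
  · rintro ⟨i, j⟩ ⟨hij, h⟩ ⟨i', j'⟩ ⟨hij', h'⟩ heq
    dsimp only at hij h hij' h' heq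
    -- Two coordinates outside `nonleast W` in the class of the same `j` are both its least element.
    have uniq : i ∉ nonleast W → i' ∉ nonleast W → j = j' → i = i' := by
      rintro hi hi' rfl
      rcases lt_trichotomy i i' with hlt | he | hlt
      · exact absurd (mem_nonleast.2 ⟨i, hlt, fun x hx => (h x hx).trans (h' x hx).symm⟩) hi'
      · exact he
      · exact absurd (mem_nonleast.2 ⟨i', hlt, fun x hx => (h' x hx).trans (h x hx).symm⟩) hi
    split_ifs at heq with hi hi' hi' <;> simp only [Sym2.eq_iff] at heq <;> grind

/-- Key claim in the proof of Lemma 3.1: if `W` is a nonempty intersection of hyperplanes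
`H_{ij} = {x : x_i = x_j}` (for pairs `i < j`) of the braid arrangement in `K^g`, and
`r := g - dim W` is its codimension, then the number of pairs `(i,j)`, `i < j`, with
`W ⊆ H_{ij}` is at most `r (r + 1) / 2`. -/
theorem braid_intersection_count_le (K : Type*) [Field K] (g : ℕ) (hg : 2 ≤ g)
    (S : Finset (Fin g × Fin g)) (hS : S.Nonempty) (hSlt : ∀ p ∈ S, p.1 < p.2)
    (W : Submodule K (Fin g → K))
    (hW : W = ⨅ p ∈ S, braidHyperplane K g p.1 p.2)
    (r : ℕ) (hr : r = g - Module.finrank K W) :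
    {p : Fin g × Fin g | p.1 < p.2 ∧ W ≤ braidHyperplane K g p.1 p.2}.ncard
      ≤ r * (r + 1) / 2 := by
  simp only [le_braidHyperplane_iff]
  have hN : (nonleast W).card ≤ r := by
    have := card_nonleast_add_finrank_le W
    omega
  calc _ ≤ ((nonleast W).card + 1).choose 2 := ncard_pairs_le W
    _ ≤ (r + 1).choose 2 := Nat.choose_le_choose 2 (by omega)
    _ = r * (r + 1) / 2 := by rw [Nat.choose_two_right, Nat.add_sub_cancel, mul_comm]
end

section
/- Let g ≥ 2 be an integer and c > 0 a real number. The function ℂ^g → ℝ given by (z_1,…,z_g) ↦ ∏_{1≤i<j≤g} |z_i − z_j|^{−2c} is integrable (with respect to Lebesgue measure on ℂ^g ≅ ℝ^{2g}) on some neighborhood of the origin if and only if c < 2/g. -/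
open MeasureTheory

/-!
Both directions use the difference coordinates `z ↦ (z i, (z k - z i)_{k ≠ i})`, which preserve
Lebesgue measure (a coordinate permutation followed by a shear).

*Integrability for `c < 2 / g`.* The integrand is the geometric mean, over `i`, of the functions
`∏_{k ≠ i} |z k - z i| ^ (-(c g))`: each pair occurs in exactly two of them, each time with exponent
`-c` after taking `g`-th roots. By AM-GM it is bounded by their arithmetic mean. In difference
coordinates based at `i` such a function is a product of `g - 1` copies of `|u| ^ (-(c g))` in
independent variables of `ℂ`, and `|u| ^ (-s)` is locally integrable on `ℂ` for `s < 2`.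

*Divergence for `c ≥ 2 / g`.* The integrand depends only on the `g - 1` differences `z k - z 0`
and is homogeneous in them of degree `-c g (g - 1) ≤ -2 (g - 1)`, while the space of differences
has real dimension `2 (g - 1)`. Halving the radius of a ball therefore does not decrease the
integral over it, so a finite integral would vanish on a spherical shell. The integrand is
positive on a nonempty open subset of the shell, a contradiction.
-/

namespace VandermondeLct

/-- The function `∏_{i<j} |z_i - z_j| ^ (-2c)`. -/
noncomputable def vand (g : ℕ) (c : ℝ) (z : Fin g → ℂ) : ℝ :=
  ∏ i : Fin g, ∏ j ∈ Finset.Ioi i, ‖z i - z j‖ ^ (-(2 * c))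

lemma vand_nonneg (g : ℕ) (c : ℝ) (z : Fin g → ℂ) : 0 ≤ vand g c z :=
  Finset.prod_nonneg fun _ _ => Finset.prod_nonneg fun _ _ => by positivity

lemma measurable_vand (g : ℕ) (c : ℝ) : Measurable (vand g c) := by
  unfold vand
  fun_prop

/-! ### Difference coordinates -/

/-- Difference coordinates based at the index `i`. -/
def diffMap {n : ℕ} (i : Fin (n + 1)) (z : Fin (n + 1) → ℂ) : ℂ × (Fin n → ℂ) :=
  (z i, fun k => z (i.succAbove k) - z i)

lemma measurePreserving_diffMap {n : ℕ} (i : Fin (n + 1)) :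
    MeasurePreserving (diffMap i) volume volume := by
  have h1 := volume_preserving_piFinSuccAbove (fun _ : Fin (n + 1) => ℂ) i
  have h2 : MeasurePreserving (fun p : ℂ × (Fin n → ℂ) => (id p.1, p.2 - fun _ => p.1))
      (volume.prod volume) (volume.prod volume) := by
    refine MeasurePreserving.skew_product (g := fun a w => w - fun _ => a)
      (MeasurePreserving.id _) ?_ ?_
    · unfold Function.uncurry
      fun_prop
    · exact Filter.Eventually.of_forall fun a =>
        (measurePreserving_sub_right volume (fun _ : Fin n => a)).map_eq
  exact h2.comp h1

/-- Transfer of integrability on a box through difference coordinates. -/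
lemma integrableOn_comp_diffMap_iff {n : ℕ} (i : Fin (n + 1)) {F : ℂ × (Fin n → ℂ) → ℝ}
    (hF : Measurable F) {s : Set ℂ} {t : Set (Fin n → ℂ)} (hs : MeasurableSet s)
    (ht : MeasurableSet t) :
    IntegrableOn (fun z => F (diffMap i z)) (diffMap i ⁻¹' (s ×ˢ t)) volume ↔
      Integrable F ((volume.restrict s).prod (volume.restrict t)) := by
  rw [Measure.prod_restrict]
  exact ((measurePreserving_diffMap i).restrict_preimage (hs.prod ht)).integrable_comp
    hF.aestronglyMeasurable

/-! ### Integrability below the threshold -/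

lemma integrableOn_norm_rpow_ball {s r : ℝ} (hs : s < 2) (hr : 0 < r) :
    IntegrableOn (fun u : ℂ => ‖u‖ ^ (-s)) (Metric.ball 0 r) volume := by
  rw [integrableOn_fun_norm_addHaar volume (f := fun y : ℝ => y ^ (-s))]
  have h := (intervalIntegral.integrableOn_Ioo_rpow_iff (s := 1 - s) hr).2 (by linarith)
  refine h.congr_fun (fun y hy => ?_) measurableSet_Ioo
  simp only [Complex.finrank_real_complex, smul_eq_mul]
  rw [sub_eq_add_neg, Real.rpow_add hy.1]
  norm_num

lemma integrableOn_star {n : ℕ} (i : Fin (n + 1)) {s : ℝ} (hs : s < 2) :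
    IntegrableOn (fun z : Fin (n + 1) → ℂ => ∏ k : Fin n, ‖z (i.succAbove k) - z i‖ ^ (-s))
      (Metric.ball 0 1) volume := by
  have h1 : Integrable (fun w : Fin n → ℂ => ∏ k : Fin n, ‖w k‖ ^ (-s))
      (volume.restrict (Metric.ball 0 2)) := by
    rw [ball_pi _ two_pos, volume_pi, Measure.restrict_pi_pi]
    exact Integrable.fintype_prod fun _ => integrableOn_norm_rpow_ball hs two_pos
  have : IsFiniteMeasure (volume.restrict (Metric.ball (0 : ℂ) 1)) :=
    ⟨by rw [Measure.restrict_apply_univ]; exact measure_ball_lt_top⟩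
  have h2 := h1.comp_snd (volume.restrict (Metric.ball (0 : ℂ) 1))
  rw [← integrableOn_comp_diffMap_iff i (by fun_prop) measurableSet_ball measurableSet_ball] at h2
  refine h2.mono_set fun z hz => ?_
  have hz' : ∀ k, ‖z k‖ < 1 := fun k =>
    (norm_le_pi_norm z k).trans_lt (by simpa using hz)
  simp only [diffMap, Set.mem_preimage, Set.mem_prod, mem_ball_zero_iff]
  refine ⟨hz' i, (pi_norm_lt_iff two_pos).2 fun k => ?_⟩
  linarith [norm_sub_le (z (i.succAbove k)) (z i), hz' i, hz' (i.succAbove k)]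

/-- The AM-GM bound by the average of the star-shaped products. -/
lemma vand_le_average (n : ℕ) (c : ℝ) (z : Fin (n + 1) → ℂ) :
    vand (n + 1) c z ≤ ∑ i : Fin (n + 1), ((n + 1 : ℕ) : ℝ)⁻¹ *
      ∏ k : Fin n, ‖z (i.succAbove k) - z i‖ ^ (-(c * (n + 1 : ℕ))) := by
  have hn : ((n + 1 : ℕ) : ℝ) ≠ 0 := by positivity
  refine le_trans (le_of_eq ?_) (Real.geom_mean_le_arith_mean_weighted Finset.univ
    (fun _ => ((n + 1 : ℕ) : ℝ)⁻¹)
    (fun i : Fin (n + 1) => ∏ k : Fin n, ‖z (i.succAbove k) - z i‖ ^ (-(c * (n + 1 : ℕ))))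
    (fun _ _ => by positivity) ?_ (fun _ _ => Finset.prod_nonneg fun _ _ => by positivity))
  · have h := Finset.prod_prod_Ioi_mul_eq_prod_prod_off_diag
      (fun i j : Fin (n + 1) => ‖z i - z j‖ ^ (-c))
    have hl : vand (n + 1) c z =
        ∏ i : Fin (n + 1), ∏ j ∈ Finset.Ioi i, ‖z j - z i‖ ^ (-c) * ‖z i - z j‖ ^ (-c) := by
      refine Finset.prod_congr rfl fun i _ => Finset.prod_congr rfl fun j _ => ?_
      rw [norm_sub_rev (z j), ← sq, ← Real.rpow_natCast, ← Real.rpow_mul (norm_nonneg _)]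
      congr 1
      push_cast
      ring
    rw [hl, h]
    refine Finset.prod_congr rfl fun i _ => ?_
    rw [← Fin.image_succAbove_univ, Finset.prod_image (Fin.succAbove_right_injective.injOn),
      ← Real.finsetProd_rpow _ _ (fun _ _ => by positivity)]
    refine Finset.prod_congr rfl fun k _ => ?_
    rw [← Real.rpow_mul (norm_nonneg _)]
    congr 1
    field_simp
  · simp only [Finset.sum_const, Finset.card_univ, Fintype.card_fin, nsmul_eq_mul]
    exact mul_inv_cancel₀ hn

lemma integrableOn_vand {n : ℕ} {c : ℝ} (hc : c * (n + 1 : ℕ) < 2) :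
    IntegrableOn (vand (n + 1) c) (Metric.ball 0 1) volume := by
  have h : IntegrableOn (fun z : Fin (n + 1) → ℂ => ∑ i : Fin (n + 1), ((n + 1 : ℕ) : ℝ)⁻¹ *
      ∏ k : Fin n, ‖z (i.succAbove k) - z i‖ ^ (-(c * (n + 1 : ℕ)))) (Metric.ball 0 1) volume :=
    integrable_finsetSum _ fun i _ => (integrableOn_star i hc).const_mul _
  refine Integrable.mono' h (measurable_vand _ _).aestronglyMeasurable
    (Filter.Eventually.of_forall fun z => ?_)
  rw [Real.norm_of_nonneg (vand_nonneg _ _ _)]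
  exact vand_le_average n c z

/-! ### Divergence at and above the threshold -/

open scoped Pointwise in
/-- A nonnegative function that is homogeneous of degree at most minus the dimension (tested only on
the dilation by `1 / 2`) is not integrable on a ball about `0` unless it vanishes almost everywhere
on the outer shell. -/
lemma not_integrableOn_ball_of_homogeneous {E : Type*} [NormedAddCommGroup E] [NormedSpace ℝ E]
    [FiniteDimensional ℝ E] [MeasurableSpace E] [BorelSpace E] (μ : Measure E)
    [μ.IsAddHaarMeasure] {G : E → ℝ} (hG : ∀ w, 0 ≤ G w) {K : ℝ}
    (hK : 2 ^ Module.finrank ℝ E ≤ K) (hhom : ∀ w, G ((1 / 2 : ℝ) • w) = K * G w) {r : ℝ}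
    (hr : 0 < r)
    (hpos : 0 < μ (Function.support G ∩ (Metric.ball 0 r \ Metric.ball 0 (r / 2)))) :
    ¬ IntegrableOn G (Metric.ball 0 r) μ := by
  intro hint
  have hsub : Metric.ball (0 : E) (r / 2) ⊆ Metric.ball 0 r :=
    Metric.ball_subset_ball (by linarith)
  have h1 := Measure.setIntegral_comp_smul_of_pos μ G (Metric.ball 0 r)
    (R := 1 / 2) (by norm_num)
  have hball : (1 / 2 : ℝ) • Metric.ball (0 : E) r = Metric.ball 0 (r / 2) := by
    rw [smul_ball (by norm_num)]
    congr 1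
    · simp
    · norm_num
      ring
  rw [hball] at h1
  simp only [hhom, integral_const_mul, smul_eq_mul] at h1
  have h2 := setIntegral_sdiff (μ := μ) (f := G) measurableSet_ball hint hsub
  have h3 := (setIntegral_pos_iff_support_of_nonneg_ae
    (Filter.Eventually.of_forall hG) (hint.mono_set Set.sdiff_subset)).2 hpos
  have h4 : 0 ≤ ∫ x in Metric.ball (0 : E) (r / 2), G x ∂μ := integral_nonneg hG
  have h5 : (((1 / 2 : ℝ) ^ Module.finrank ℝ E)⁻¹) = 2 ^ Module.finrank ℝ E := by
    simp
  rw [h5] at h1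
  have hK0 : 0 < K := lt_of_lt_of_le (by positivity) hK
  nlinarith [mul_le_mul_of_nonneg_right hK h4]

lemma vand_smul (g : ℕ) (c : ℝ) {R : ℝ} (hR : 0 < R) (z : Fin g → ℂ) :
    vand g c (R • z) = R ^ (-(c * (g * (g - 1)))) * vand g c z := by
  have hcard : (∑ i : Fin g, (Finset.Ioi i).card) * 2 = g * (g - 1) := by
    simp only [Fin.card_Ioi]
    rw [Fin.sum_univ_eq_sum_range (fun i => g - 1 - i), Finset.sum_range_reflect (fun i => i),
      Finset.sum_range_id_mul_two]
  have hcard' : ((∑ i : Fin g, (Finset.Ioi i).card : ℕ) : ℝ) * 2 = g * (g - 1) := by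
    rcases g with _ | g
    · simp
    · have := congrArg (Nat.cast : ℕ → ℝ) hcard
      push_cast [Nat.add_sub_cancel] at this ⊢
      linarith
  have hterm : ∀ i j : Fin g, ‖(R • z) i - (R • z) j‖ ^ (-(2 * c)) =
      R ^ (-(2 * c)) * ‖z i - z j‖ ^ (-(2 * c)) := fun i j => by
    rw [Pi.smul_apply, Pi.smul_apply, ← smul_sub, norm_smul, Real.norm_of_nonneg hR.le,
      Real.mul_rpow hR.le (norm_nonneg _)]
  unfold vand
  simp only [hterm, Finset.prod_mul_distrib, Finset.prod_const]
  rw [Finset.prod_pow_eq_pow_sum, ← Real.rpow_natCast, ← Real.rpow_mul hR.le]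
  congr 2
  rw [← hcard']
  ring

/-- The Vandermonde function in terms of the differences `w k = z (k + 1) - z 0`. -/
noncomputable def vandDiff (n : ℕ) (c : ℝ) (w : Fin n → ℂ) : ℝ :=
  vand (n + 1) c (Fin.cons 0 w : Fin (n + 1) → ℂ)

lemma vandDiff_diffMap (n : ℕ) (c : ℝ) (z : Fin (n + 1) → ℂ) :
    vandDiff n c (diffMap 0 z).2 = vand (n + 1) c z := by
  have h : (Fin.cons 0 (diffMap 0 z).2 : Fin (n + 1) → ℂ) = fun i => z i - z 0 := by
    funext i
    refine Fin.cases ?_ (fun k => ?_) i <;> simp [diffMap]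
  simp [vandDiff, h, vand]

lemma measurable_vandDiff (n : ℕ) (c : ℝ) : Measurable (vandDiff n c) := by
  refine (measurable_vand _ _).comp (measurable_pi_lambda _ fun i => ?_)
  refine Fin.cases ?_ (fun k => ?_) i
  · simp
  · simpa using measurable_pi_apply k

lemma vandDiff_smul (n : ℕ) (c : ℝ) {R : ℝ} (hR : 0 < R) (w : Fin n → ℂ) :
    vandDiff n c (R • w) = R ^ (-(c * ((n + 1) * n))) * vandDiff n c w := by
  have h : (Fin.cons 0 (R • w) : Fin (n + 1) → ℂ) = R • (Fin.cons 0 w : Fin (n + 1) → ℂ) := by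
    funext i
    refine Fin.cases ?_ (fun k => ?_) i <;> simp
  unfold vandDiff
  rw [h, vand_smul _ _ hR]
  push_cast
  ring_nf

lemma vandDiff_ne_zero {n : ℕ} (c : ℝ) {w : Fin n → ℂ}
    (hw : Function.Injective (Fin.cons 0 w : Fin (n + 1) → ℂ)) : vandDiff n c w ≠ 0 := by
  unfold vandDiff vand
  refine Finset.prod_ne_zero_iff.2 fun i _ => Finset.prod_ne_zero_iff.2 fun j hj => ?_
  have hij : i ≠ j := (Finset.mem_Ioi.1 hj).ne
  have := norm_pos_iff.2 (sub_ne_zero.2 (hw.ne hij))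
  positivity

lemma isOpen_injective_cons (n : ℕ) :
    IsOpen {w : Fin n → ℂ | Function.Injective (Fin.cons 0 w : Fin (n + 1) → ℂ)} := by
  have h : {w : Fin n → ℂ | Function.Injective (Fin.cons 0 w : Fin (n + 1) → ℂ)} =
      ⋂ i : Fin (n + 1), ⋂ j : Fin (n + 1), {w | i ≠ j →
        (Fin.cons 0 w : Fin (n + 1) → ℂ) i ≠ (Fin.cons 0 w : Fin (n + 1) → ℂ) j} := by
    ext w
    simp only [Set.mem_ofPred_eq, Set.mem_iInter]
    exact ⟨fun h i j => h.ne, fun h i j hij => by_contra fun hne => h i j hne hij⟩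
  have hcont : ∀ i : Fin (n + 1),
      Continuous fun w : Fin n → ℂ => (Fin.cons 0 w : Fin (n + 1) → ℂ) i := fun i => by
    refine Fin.cases ?_ (fun k => ?_) i
    · simpa using continuous_const
    · simpa using continuous_apply k
  rw [h]
  refine isOpen_iInter_of_finite fun i => isOpen_iInter_of_finite fun j => ?_
  by_cases hij : i = j
  · simp [hij]
  · simpa [hij] using isOpen_ne_fun (hcont i) (hcont j)

lemma shell_support_pos {n : ℕ} (hn : 1 ≤ n) (c : ℝ) {r : ℝ} (hr : 0 < r) :
    0 < volume (Function.support (vandDiff n c) ∩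
      (Metric.ball 0 r \ Metric.ball 0 (r / 2))) := by
  set V : Set (Fin n → ℂ) := {w | Function.Injective (Fin.cons 0 w : Fin (n + 1) → ℂ)} ∩
    (Metric.ball 0 r \ Metric.closedBall 0 (r / 2))
  have hVo : IsOpen V :=
    (isOpen_injective_cons n).inter (Metric.isOpen_ball.sdiff Metric.isClosed_closedBall)
  have hVs : V ⊆ Function.support (vandDiff n c) ∩ (Metric.ball 0 r \ Metric.ball 0 (r / 2)) :=
    fun w hw => ⟨vandDiff_ne_zero c hw.1, hw.2.1, fun h => hw.2.2 (Metric.ball_subset_closedBall h)⟩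
  refine (hVo.measure_pos volume ?_).trans_le (measure_mono hVs)
  -- Equally spaced points on a segment, the farthest at distance `3r/4` from the origin.
  have hn0 : (0 : ℝ) < n := by exact_mod_cast hn
  have hd : 0 < 3 * r / 4 / n := by positivity
  set d : ℝ := 3 * r / 4 / n with hd_def
  have hdn : d * n = 3 * r / 4 := by rw [hd_def]; field_simp
  have hnorm : ∀ k : Fin n, ‖((d * ((k : ℕ) + 1 : ℝ) : ℝ) : ℂ)‖ = d * ((k : ℕ) + 1) := fun k => by
    rw [Complex.norm_real, Real.norm_of_nonneg (by positivity)]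
  refine ⟨fun k => ((d * ((k : ℕ) + 1 : ℝ) : ℝ) : ℂ), ?_, ?_, ?_⟩
  · have h : (Fin.cons 0 (fun k : Fin n => ((d * ((k : ℕ) + 1 : ℝ) : ℝ) : ℂ)) : Fin (n + 1) → ℂ) =
        fun i : Fin (n + 1) => ((d * ((i : ℕ) : ℝ) : ℝ) : ℂ) := by
      funext i
      refine Fin.cases ?_ (fun k => ?_) i <;> simp
    simp only [Set.mem_ofPred_eq, h]
    intro i j hij
    have := mul_left_cancel₀ hd.ne' (Complex.ofReal_injective hij)
    exact Fin.ext (by exact_mod_cast this)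
  · rw [mem_ball_zero_iff, pi_norm_lt_iff hr]
    intro k
    rw [hnorm]
    have hk : ((k : ℕ) : ℝ) + 1 ≤ n := by exact_mod_cast k.2
    nlinarith
  · rw [mem_closedBall_zero_iff, not_le]
    refine lt_of_lt_of_le ?_ (norm_le_pi_norm _ (⟨n - 1, by omega⟩ : Fin n))
    rw [hnorm]
    push_cast [Nat.cast_sub hn]
    nlinarith

lemma not_integrableOn_vandDiff {n : ℕ} (hn : 1 ≤ n) {c : ℝ} (hc : 2 ≤ c * (n + 1)) {r : ℝ}
    (hr : 0 < r) : ¬ IntegrableOn (vandDiff n c) (Metric.ball 0 r) volume := by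
  refine not_integrableOn_ball_of_homogeneous volume (fun w => vand_nonneg _ _ _) ?_
    (fun w => vandDiff_smul n c (by norm_num) w) hr (shell_support_pos hn c hr)
  have hdim : Module.finrank ℝ (Fin n → ℂ) = n * 2 := by
    simp [Module.finrank_pi_fintype, Complex.finrank_real_complex]
  have hn0 : (0 : ℝ) ≤ n := by positivity
  rw [hdim, one_div, Real.inv_rpow zero_le_two, ← Real.rpow_neg zero_le_two, neg_neg,
    ← Real.rpow_natCast]
  refine Real.rpow_le_rpow_of_exponent_le one_le_two ?_
  push_cast
  nlinarith

lemma not_integrableOn_vand {n : ℕ} (hn : 1 ≤ n) {c : ℝ} (hc : 2 ≤ c * (n + 1)) {r : ℝ}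
    (hr : 0 < r) : ¬ IntegrableOn (vand (n + 1) c) (Metric.ball 0 r) volume := by
  intro hint
  have hr2 : 0 < r / 2 := by positivity
  have hsub : diffMap (0 : Fin (n + 1)) ⁻¹' (Metric.ball 0 (r / 2) ×ˢ Metric.ball 0 (r / 2)) ⊆
      Metric.ball 0 r := by
    rintro z ⟨h0, h1⟩
    simp only [diffMap, mem_ball_zero_iff] at h0 h1
    rw [pi_norm_lt_iff hr2] at h1
    rw [mem_ball_zero_iff, pi_norm_lt_iff hr]
    refine fun i => Fin.cases (by linarith) (fun k => ?_) i
    have h2 := h1 k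
    rw [Fin.zero_succAbove] at h2
    linarith [norm_sub_norm_le (z k.succ) (z 0)]
  have h := hint.mono_set hsub
  have hcongr : vand (n + 1) c = fun z => (fun p : ℂ × (Fin n → ℂ) => vandDiff n c p.2)
      (diffMap 0 z) := funext fun z => (vandDiff_diffMap n c z).symm
  rw [hcongr] at h
  replace h := (integrableOn_comp_diffMap_iff 0 ((measurable_vandDiff n c).comp measurable_snd)
    measurableSet_ball measurableSet_ball).1 h
  simp only [Function.comp_def] at h
  have : IsFiniteMeasure (volume.restrict (Metric.ball (0 : ℂ) (r / 2))) :=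
    ⟨by rw [Measure.restrict_apply_univ]; exact measure_ball_lt_top⟩
  rw [Integrable.comp_snd_iff (f := vandDiff n c)] at h
  · exact not_integrableOn_vandDiff hn hc hr2 h
  · rw [Ne, Measure.restrict_eq_zero]
    exact (Metric.measure_ball_pos volume (0 : ℂ) hr2).ne'

end VandermondeLct

/-- The analytic form of Lemma 3.1 (Mustață): the function
`z ↦ ∏_{i<j} |z_i - z_j|^{-2c}` on `ℂ^g` is integrable near the origin
iff `c < 2/g`; i.e. the log canonical threshold of the Vandermonde divisor at `0` is `2/g`. -/
theorem vandermonde_lct_complex (g : ℕ) (hg : 2 ≤ g) (c : ℝ) (hc : 0 < c) :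
    (∃ U ∈ nhds (0 : Fin g → ℂ), IntegrableOn
        (fun z : Fin g → ℂ => ∏ i : Fin g, ∏ j ∈ Finset.Ioi i, ‖z i - z j‖ ^ (-(2 * c)))
        U volume) ↔ c < 2 / g := by
  obtain ⟨n, rfl⟩ : ∃ n, g = n + 1 := ⟨g - 1, by omega⟩
  have hn : (0 : ℝ) < (n + 1 : ℕ) := by positivity
  rw [lt_div_iff₀ hn]
  constructor
  · rintro ⟨U, hU, hint⟩
    by_contra! hle
    obtain ⟨r, hr, hrU⟩ := Metric.mem_nhds_iff.1 hU
    exact VandermondeLct.not_integrableOn_vand (by omega) (by exact_mod_cast hle) hr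
      (hint.mono_set hrU)
  · intro h
    exact ⟨Metric.ball 0 1, Metric.ball_mem_nhds _ one_pos, VandermondeLct.integrableOn_vand h⟩
end

section
/- Let g ≥ 2 be an integer and c > 0 a real number. The function ℝ^g → ℝ given by (x_1,…,x_g) ↦ ∏_{1≤i<j≤g} |x_i − x_j|^{−c} is Lebesgue-integrable on some neighborhood of the origin if and only if c < 2/g. -/
open MeasureTheory

/-!
Write `V x = ∏_{i<j} (x_j - x_i)`; by `prod_rpow_eq` the integrand is `|V x| ^ (-c)`.

*Sufficiency.* If `x` is sorted increasingly, then `x_j - x_i` is at least the geometric mean of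
its first and last gaps, `x_{i+1} - x_i` and `x_j - x_{j-1}`. Multiplying over all pairs, each of
the `g - 1` gaps is counted with total exponent exactly `g / 2`, so `V x ^ 2` dominates the
`g`-th power of the product of the gaps (`prod_gap_pow_le_sq`). Since `|V|` is symmetric,
`|V| ^ (-c)` is bounded for arbitrary `x` by the sum over all permutations `σ` of
`∏_k |x_{σ(k+1)} - x_{σ(k)}| ^ (-c g / 2)` (`vandermonde_rpow_le_sum`). Each summand is integrable
on a cube when `c g / 2 < 1`, by integrating out one end of the path at a time
(`lintegral_path_lt_top`).

*Necessity.* If `c ≥ 2 / g`, cut the beginning of the diagonal into `m` steps of length `δ = ε / m`.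
Near each step there is a box of side `δ / g` all of whose points have distinct coordinates within
`δ` of each other; there the integrand is at least `δ ^ (-c g (g - 1) / 2) ≥ δ ^ (-(g - 1))`
(`rpow_le_of_mem_stairBox`). The boxes are disjoint, so the integral over their union is at least
`m (δ / g) ^ g δ ^ (-(g - 1)) = ε / g ^ g`, independently of `m`, although the measure of the union
tends to `0`. This contradicts the absolute continuity of the integral.
-/

/-! ### The bound by the product of gaps -/

/-- By induction, removing the smallest entry `y 0`: the factors `y k.succ - y 0` satisfy
`(y k.succ - y 0) ^ 2 ≥ (first gap) * (k-th gap)`, which raises the exponent of every gap by one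
and supplies the full power of the first gap. -/
theorem prod_gap_pow_le_sq {n : ℕ} (y : Fin (n + 1) → ℝ) (hy : Monotone y) :
    ∏ k : Fin n, (y k.succ - y k.castSucc) ^ (n + 1) ≤
      (∏ i, ∏ j ∈ Finset.Ioi i, (y j - y i)) ^ 2 := by
  induction n with
  | zero => simp
  | succ n ih =>
    have ih' := ih (fun i => y i.succ) (hy.comp (Fin.strictMono_succ).monotone)
    rw [Fin.prod_univ_succ (n := n + 1)]
    simp only [Fin.prod_Ioi_zero, Fin.prod_Ioi_succ]
    have hg : ∀ k : Fin (n + 1), 0 ≤ y k.succ - y k.castSucc := fun k =>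
      sub_nonneg.2 (hy (Fin.castSucc_lt_succ).le)
    have h1 : ∏ k : Fin (n + 1), ((y (Fin.succ 0) - y (Fin.castSucc 0)) *
        (y k.succ - y k.castSucc)) ≤ (∏ k : Fin (n + 1), (y k.succ - y 0)) ^ 2 := by
      rw [← Finset.prod_pow]
      refine Finset.prod_le_prod (fun k _ => mul_nonneg (hg 0) (hg k)) fun k _ => ?_
      rw [sq]
      have a1 : y (Fin.succ 0) ≤ y k.succ := hy (by simp [Fin.le_def])
      have a2 : y 0 ≤ y k.castSucc := hy (Fin.zero_le _)
      have a3 := hg k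
      have a4 := hg 0
      simp only [Fin.castSucc_zero] at a4 ⊢
      exact mul_le_mul (by linarith) (by linarith) a3 (by linarith)
    rw [mul_pow]
    refine le_trans (le_of_eq ?_) (mul_le_mul h1 ih'
      (Finset.prod_nonneg fun k _ => pow_nonneg (by simpa using hg k.succ) _) (sq_nonneg _))
    rw [Finset.prod_mul_distrib, Finset.prod_const, Fin.prod_univ_succ, Fin.prod_univ_succ
      (fun k : Fin (n+1) => y k.succ - y k.castSucc)]
    simp only [Finset.prod_pow, Finset.card_univ, Fintype.card_fin, Fin.succ_castSucc]
    ring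

theorem prod_rpow_eq {n : ℕ} (c : ℝ) (x : Fin n → ℝ) :
    ∏ i, ∏ j ∈ Finset.Ioi i, |x i - x j| ^ (-c) = |(Matrix.vandermonde x).det| ^ (-c) := by
  rw [Matrix.det_vandermonde, Finset.abs_prod, ← Real.finsetProd_rpow _ _ (fun _ _ => abs_nonneg _)]
  refine Finset.prod_congr rfl fun i _ => ?_
  rw [Finset.abs_prod, ← Real.finsetProd_rpow _ _ (fun _ _ => abs_nonneg _)]
  exact Finset.prod_congr rfl fun j _ => by rw [abs_sub_comm]

/-- When two entries of `y` coincide, the left side is `0 ^ (-c) = 0` by convention, so the bound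
holds without a distinctness hypothesis. -/
theorem vandermonde_rpow_le_of_monotone {n : ℕ} {c : ℝ} (hc : 0 < c) (y : Fin (n + 1) → ℝ)
    (hy : Monotone y) :
    |(Matrix.vandermonde y).det| ^ (-c) ≤
      ∏ k : Fin n, |y k.succ - y k.castSucc| ^ (-(c * (n + 1) / 2)) := by
  by_cases hinj : Function.Injective y
  · have hs := hy.strictMono_of_injective hinj
    have hg : ∀ k : Fin n, 0 < y k.succ - y k.castSucc := fun k =>
      sub_pos.2 (hs (Fin.castSucc_lt_succ))
    have h := prod_gap_pow_le_sq y hy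
    rw [← Matrix.det_vandermonde, ← sq_abs] at h
    have h2 := Real.rpow_le_rpow_of_nonpos (z := -(c / 2))
      (Finset.prod_pos fun k _ => pow_pos (hg k) _) h (by linarith)
    rw [← Real.rpow_natCast, ← Real.rpow_mul (abs_nonneg _),
      ← Real.finsetProd_rpow _ _ (fun k _ => (pow_pos (hg k) _).le)] at h2
    convert h2 using 2 with k
    · push_cast; ring
    · rw [← Real.rpow_natCast, ← Real.rpow_mul (hg _).le, abs_of_pos (hg _)]
      congr 1; push_cast; ring
  · rw [not_imp_comm.1 Matrix.det_vandermonde_ne_zero_iff.1 hinj, abs_zero,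
      Real.zero_rpow (by linarith)]
    exact Finset.prod_nonneg fun k _ => Real.rpow_nonneg (abs_nonneg _) _

/-- For arbitrary `x`, the summand of the permutation sorting `x` already dominates the left
side. -/
theorem vandermonde_rpow_le_sum {n : ℕ} {c : ℝ} (hc : 0 < c) (x : Fin (n + 1) → ℝ) :
    |(Matrix.vandermonde x).det| ^ (-c) ≤
      ∑ σ : Equiv.Perm (Fin (n + 1)),
        ∏ k : Fin n, |x (σ k.succ) - x (σ k.castSucc)| ^ (-(c * (n + 1) / 2)) := by
  have h := vandermonde_rpow_le_of_monotone hc _ (Tuple.monotone_sort x)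
  have h2 : |(Matrix.vandermonde (x ∘ Tuple.sort x)).det| = |(Matrix.vandermonde x).det| :=
    Matrix.abs_det_submatrix_equiv_equiv (Tuple.sort x) (Equiv.refl _) (Matrix.vandermonde x)
  rw [h2] at h
  refine h.trans (Finset.single_le_sum (f := fun σ : Equiv.Perm (Fin (n + 1)) =>
    ∏ k : Fin n, |x (σ k.succ) - x (σ k.castSucc)| ^ (-(c * (n + 1) / 2))) (fun σ _ => ?_)
    (Finset.mem_univ (Tuple.sort x)))
  exact Finset.prod_nonneg fun k _ => Real.rpow_nonneg (abs_nonneg _) _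

/-! ### Integrability of the path products -/

theorem lintegral_abs_rpow_lt_top {a : ℝ} (ha : a < 1) :
    ∫⁻ u in Set.Icc (-1 : ℝ) 1, ENNReal.ofReal (|u| ^ (-a)) < ⊤ := by
  have h1 : IntervalIntegrable (fun u : ℝ => |u| ^ (-a)) volume 0 1 := by
    refine (intervalIntegral.intervalIntegrable_rpow' (r := -a) (by linarith)).congr ?_
    intro u hu
    rw [Set.uIoc_of_le zero_le_one] at hu
    simp only [abs_of_pos hu.1]
  have h2 : IntervalIntegrable (fun u : ℝ => |u| ^ (-a)) volume (-1) 0 := by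
    simpa using (h1.comp_sub_left 0).symm
  have h3 := (intervalIntegrable_iff_integrableOn_Icc_of_le (by norm_num)).1 (h2.trans h1)
  exact h3.lintegral_lt_top

/-- A bound uniform in the position `s` of the singularity: where `|s - t| > 1` the integrand is at
most `1`, and the interval has length `2`. -/
theorem lintegral_abs_sub_rpow_le {a : ℝ} (ha0 : 0 ≤ a) (s : ℝ) :
    ∫⁻ t in Set.Icc (-1 : ℝ) 1, ENNReal.ofReal (|s - t| ^ (-a)) ≤
      (∫⁻ u in Set.Icc (-1 : ℝ) 1, ENNReal.ofReal (|u| ^ (-a))) + 2 := by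
  have hb : ∀ t, ENNReal.ofReal (|s - t| ^ (-a)) ≤
      (Set.Icc (-1 : ℝ) 1).indicator (fun u => ENNReal.ofReal (|u| ^ (-a))) (s - t) + 1 := by
    intro t
    by_cases ht : s - t ∈ Set.Icc (-1 : ℝ) 1
    · rw [Set.indicator_of_mem ht]; exact le_self_add
    · rw [Set.indicator_of_notMem ht, zero_add, ENNReal.ofReal_le_one]
      refine Real.rpow_le_one_of_one_le_of_nonpos ?_ (by linarith)
      by_contra! h
      exact ht ⟨(abs_lt.1 h).1.le, (abs_lt.1 h).2.le⟩
  calc _ ≤ ∫⁻ t in Set.Icc (-1 : ℝ) 1, ((Set.Icc (-1 : ℝ) 1).indicator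
          (fun u => ENNReal.ofReal (|u| ^ (-a))) (s - t) + 1) := lintegral_mono hb
    _ = (∫⁻ t in Set.Icc (-1 : ℝ) 1, (Set.Icc (-1 : ℝ) 1).indicator
          (fun u => ENNReal.ofReal (|u| ^ (-a))) (s - t)) + 2 := by
        rw [lintegral_add_right _ measurable_const]
        norm_num
    _ ≤ (∫⁻ t, (Set.Icc (-1 : ℝ) 1).indicator
          (fun u => ENNReal.ofReal (|u| ^ (-a))) (s - t)) + 2 := by
        gcongr
        exact Measure.restrict_le_self
    _ = _ := by
        rw [lintegral_sub_left_eq_self (μ := volume) ((Set.Icc (-1 : ℝ) 1).indicator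
          (fun u => ENNReal.ofReal (|u| ^ (-a)))) s, lintegral_indicator measurableSet_Icc]

theorem lintegral_path_lt_top {a : ℝ} (ha0 : 0 ≤ a) (ha : a < 1) (n : ℕ) :
    ∫⁻ x : Fin (n + 1) → ℝ, ∏ k : Fin n, ENNReal.ofReal (|x k.succ - x k.castSucc| ^ (-a))
      ∂(Measure.pi fun _ => volume.restrict (Set.Icc (-1 : ℝ) 1)) < ⊤ := by
  induction n with
  | zero => simp
  | succ n ih =>
    set μ : Measure ℝ := volume.restrict (Set.Icc (-1 : ℝ) 1) with hμ
    have hm := (measurePreserving_piFinSuccAbove (fun _ : Fin (n + 2) => μ) 0).symm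
    -- Split off the coordinate `x 0`, which occurs only in the factor `|x 1 - x 0| ^ (-a)`, and
    -- integrate it first.
    rw [← hm.lintegral_comp (by fun_prop)]
    set C := (∫⁻ u in Set.Icc (-1 : ℝ) 1, ENNReal.ofReal (|u| ^ (-a))) + 2 with hC
    have hCt : C < ⊤ := ENNReal.add_lt_top.2 ⟨lintegral_abs_rpow_lt_top ha, by simp⟩
    rw [lintegral_prod_symm' _ (by fun_prop)]
    simp only [Fin.prod_univ_succ (n := n), MeasurableEquiv.piFinSuccAbove_symm_apply,
      Fin.insertNthEquiv_zero, Fin.consEquiv_apply, Fin.cons_succ, Fin.castSucc_zero,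
      Fin.cons_zero, ← Fin.succ_castSucc]
    calc _ = ∫⁻ y : Fin (n + 1) → ℝ, (∫⁻ t, ENNReal.ofReal (|y 0 - t| ^ (-a)) ∂μ) *
            ∏ k : Fin n, ENNReal.ofReal (|y k.succ - y k.castSucc| ^ (-a))
            ∂(Measure.pi fun _ => μ) := by
          refine lintegral_congr fun y => ?_
          exact lintegral_mul_const _ (by fun_prop)
      _ ≤ ∫⁻ y : Fin (n + 1) → ℝ, C *
            ∏ k : Fin n, ENNReal.ofReal (|y k.succ - y k.castSucc| ^ (-a))
            ∂(Measure.pi fun _ => μ) := by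
          refine lintegral_mono fun y => ?_
          gcongr
          exact lintegral_abs_sub_rpow_le ha0 (y 0)
      _ < ⊤ := by
          rw [lintegral_const_mul _ (by fun_prop)]
          exact ENNReal.mul_lt_top hCt ih

/-- Here the dimension is `g = n + 1`, so the hypothesis is `c < 2 / g`. -/
theorem integrableOn_of_lt {n : ℕ} {c : ℝ} (hc : 0 < c) (hlt : c * (n + 1) / 2 < 1) :
    IntegrableOn (fun x : Fin (n + 1) → ℝ => |(Matrix.vandermonde x).det| ^ (-c))
      (Set.univ.pi fun _ => Set.Icc (-1 : ℝ) 1) := by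
  set μ : Measure ℝ := volume.restrict (Set.Icc (-1 : ℝ) 1) with hμ
  have hres : (volume : Measure (Fin (n + 1) → ℝ)).restrict
      (Set.univ.pi fun _ => Set.Icc (-1 : ℝ) 1) = Measure.pi fun _ => μ :=
    Measure.restrict_pi_pi _ _
  have hmeas : Measurable fun x : Fin (n + 1) → ℝ => |(Matrix.vandermonde x).det| ^ (-c) := by
    simp only [← prod_rpow_eq]
    fun_prop
  rw [IntegrableOn, hres]
  refine ⟨hmeas.aestronglyMeasurable, ?_⟩
  set a := c * (n + 1) / 2 with ha
  rw [hasFiniteIntegral_iff_ofReal (.of_forall fun x => Real.rpow_nonneg (abs_nonneg _) _)]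
  calc _ ≤ ∫⁻ x : Fin (n + 1) → ℝ, ∑ σ : Equiv.Perm (Fin (n + 1)), ∏ k : Fin n,
          ENNReal.ofReal (|x (σ k.succ) - x (σ k.castSucc)| ^ (-a)) ∂(Measure.pi fun _ => μ) := by
        refine lintegral_mono fun x => ?_
        refine (ENNReal.ofReal_le_ofReal (vandermonde_rpow_le_sum hc x)).trans (le_of_eq ?_)
        have h0 : ∀ (σ : Equiv.Perm (Fin (n + 1))) (k : Fin n),
            0 ≤ |x (σ k.succ) - x (σ k.castSucc)| ^ (-a) :=
          fun σ k => Real.rpow_nonneg (abs_nonneg _) _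
        rw [ENNReal.ofReal_sum_of_nonneg fun σ _ => Finset.prod_nonneg fun k _ => h0 σ k]
        exact Finset.sum_congr rfl fun σ _ => ENNReal.ofReal_prod_of_nonneg fun k _ => h0 σ k
    _ = ∑ σ : Equiv.Perm (Fin (n + 1)), ∫⁻ x : Fin (n + 1) → ℝ, ∏ k : Fin n,
          ENNReal.ofReal (|x (σ k.succ) - x (σ k.castSucc)| ^ (-a)) ∂(Measure.pi fun _ => μ) :=
        lintegral_finsetSum _ fun σ _ => by fun_prop
    _ < ⊤ := by
        refine ENNReal.sum_lt_top.2 fun σ _ => ?_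
        have hp := measurePreserving_arrowCongr' (fun _ : Fin (n + 1) => μ) (fun _ => μ) σ.symm
          (MeasurableEquiv.refl ℝ) (fun _ => MeasurePreserving.id _)
        have := hp.lintegral_comp (f := fun x : Fin (n + 1) → ℝ => ∏ k : Fin n,
          ENNReal.ofReal (|x k.succ - x k.castSucc| ^ (-a))) (by fun_prop)
        refine lt_of_eq_of_lt this (lintegral_path_lt_top (by positivity) hlt n)

/-! ### Divergence for large exponents -/

theorem sum_card_Ioi (g : ℕ) : ((∑ i : Fin g, (Finset.Ioi i).card : ℕ) : ℝ) = g * (g - 1) / 2 := by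
  induction g with
  | zero => simp
  | succ n ih =>
    simp only [Fin.card_Ioi] at ih ⊢
    rw [Fin.sum_univ_succ]
    have : ∀ i : Fin n, n + 1 - 1 - (i.succ : ℕ) = n - 1 - i := fun i => by simp; omega
    simp only [this, Nat.cast_add, ih]
    simp
    ring

/-- The `k`-th box of a staircase along the diagonal of `ℝ^g`: the `i`-th coordinate ranges over an
interval of length `η` starting at `(k g + i) η`. The shift by `i` makes the coordinates of every
point strictly increasing, so that the integrand never takes its conventional value `0` on
the box. -/
def stairBox (g : ℕ) (η : ℝ) (k : ℕ) : Set (Fin g → ℝ) :=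
  Set.univ.pi fun i : Fin g => Set.Ico ((k * g + i) * η) ((k * g + i + 1) * η)

/-- All differences of coordinates lie in `(0, g η]`, and there are `g (g - 1) / 2` of them; with
`c ≥ 2 / g` and `g η ≤ 1` the total exponent is at most `-(g - 1)`. -/
theorem rpow_le_of_mem_stairBox {g : ℕ} {c η : ℝ} (hc : 0 < c) (hη : 0 < η)
    (h1 : g * η ≤ 1) (hcg : 2 / g ≤ c) (hg : 2 ≤ g) {k : ℕ} {x : Fin g → ℝ}
    (hx : x ∈ stairBox g η k) :
    (g * η) ^ (-(g - 1 : ℝ)) ≤ ∏ i : Fin g, ∏ j ∈ Finset.Ioi i, |x i - x j| ^ (-c) := by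
  have hg0 : (0 : ℝ) < g := by positivity
  have hδ : 0 < g * η := by positivity
  have hg1 : (2 : ℝ) ≤ g := by exact_mod_cast hg
  calc (g * η) ^ (-(g - 1 : ℝ)) ≤ (g * η) ^ (-c * ((∑ i : Fin g, (Finset.Ioi i).card : ℕ) : ℝ)) := by
        apply Real.rpow_le_rpow_of_exponent_ge hδ h1
        rw [sum_card_Ioi]
        rw [div_le_iff₀ hg0] at hcg
        nlinarith
    _ = ∏ i : Fin g, ∏ j ∈ Finset.Ioi i, (g * η) ^ (-c) := by
        simp only [Finset.prod_const]
        rw [Finset.prod_pow_eq_pow_sum, Real.rpow_mul hδ.le, Real.rpow_natCast]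
    _ ≤ _ := by
        have h0 : (0 : ℝ) ≤ (g * η) ^ (-c) := by positivity
        refine Finset.prod_le_prod (fun i _ => Finset.prod_nonneg fun _ _ => h0) fun i _ => ?_
        refine Finset.prod_le_prod (fun _ _ => h0) fun j hj => ?_
        have hij : (i : ℝ) + 1 ≤ j := by exact_mod_cast Finset.mem_Ioi.1 hj
        have hjg : (j : ℝ) + 1 ≤ g := by exact_mod_cast j.2
        have hi0 : (0 : ℝ) ≤ i := by positivity
        have hi := hx i (Set.mem_univ _)
        have hj := hx j (Set.mem_univ _)
        simp only [Set.mem_Ico] at hi hj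
        have hlt : x i < x j := hi.2.trans_le (le_trans (by gcongr ?_ * _; linarith) hj.1)
        have hle : x j - x i ≤ g * η := by nlinarith
        rw [abs_sub_comm, abs_of_pos (sub_pos.2 hlt)]
        exact Real.rpow_le_rpow_of_nonpos (sub_pos.2 hlt) hle (by linarith)

theorem volume_stairBox (g : ℕ) (η : ℝ) (k : ℕ) :
    volume (stairBox g η k) = ENNReal.ofReal η ^ g := by
  rw [stairBox, volume_pi_pi]
  simp only [Real.volume_Ico]
  rw [Finset.prod_congr rfl fun i _ => show _ = ENNReal.ofReal η by congr 1; ring]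
  simp

theorem measurableSet_stairBox (g : ℕ) (η : ℝ) (k : ℕ) : MeasurableSet (stairBox g η k) :=
  MeasurableSet.univ_pi fun _ => measurableSet_Ico

theorem disjoint_stairBox {g : ℕ} (hg : 0 < g) {η : ℝ} (hη : 0 < η) {k l : ℕ} (hkl : k < l) :
    Disjoint (stairBox g η k) (stairBox g η l) := by
  refine Set.disjoint_left.2 fun x hk hl => ?_
  have h1 := (hk ⟨0, hg⟩ (Set.mem_univ _)).2
  have h2 := (hl ⟨0, hg⟩ (Set.mem_univ _)).1
  have h3 : (k : ℝ) * g + 1 ≤ l * g := by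
    have : (k + 1) * g ≤ l * g := Nat.mul_le_mul_right _ hkl
    have h4 : k * g + 1 ≤ l * g := by nlinarith
    exact_mod_cast h4
  simp only [Nat.cast_zero, add_zero] at h1 h2
  nlinarith

theorem volume_stairs {g : ℕ} (hg : 0 < g) {η : ℝ} (hη : 0 < η) (m : ℕ) :
    volume (⋃ k ∈ Finset.range m, stairBox g η k) = m * ENNReal.ofReal η ^ g := by
  rw [measure_biUnion_finset _ fun k _ => measurableSet_stairBox g η k]
  · simp [volume_stairBox]
  · intro k _ l _ hkl
    rcases lt_or_gt_of_ne hkl with h | h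
    · exact disjoint_stairBox hg hη h
    · exact (disjoint_stairBox hg hη h).symm

/-- Otherwise the integrals over staircases of `m + 1` boxes of side `ε / ((m + 1) g)` stay above
`ε / g ^ g` while the measures of the staircases tend to zero. -/
theorem lt_of_integrableOn {g : ℕ} (hg : 2 ≤ g) {c : ℝ} (hc : 0 < c) {U : Set (Fin g → ℝ)}
    (hU : U ∈ nhds 0) (hint : IntegrableOn
      (fun x : Fin g → ℝ => ∏ i : Fin g, ∏ j ∈ Finset.Ioi i, |x i - x j| ^ (-c)) U) :
    c < 2 / g := by
  by_contra! hcg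
  obtain ⟨r, hr, hrU⟩ := Metric.mem_nhds_iff.1 hU
  obtain ⟨ε, hε, hεr, hε1⟩ : ∃ ε : ℝ, 0 < ε ∧ ε ≤ r ∧ ε ≤ 1 :=
    ⟨min r 1, by positivity, min_le_left _ _, min_le_right _ _⟩
  have hg0 : (0 : ℝ) < g := by positivity
  have hgpos : 0 < g := by omega
  set η : ℕ → ℝ := fun m => ε / ((m + 1 : ℕ) * g) with hηdef
  have hη : ∀ m, 0 < η m := fun m => by positivity
  have hmη : ∀ m, ((m + 1 : ℕ) : ℝ) * (g * η m) = ε := fun m => by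
    simp only [hηdef]; field_simp
  have hgη1 : ∀ m, g * η m ≤ 1 := fun m => by
    have : (1 : ℝ) ≤ (m + 1 : ℕ) := by simp
    have h0 : 0 < g * η m := mul_pos hg0 (hη m)
    nlinarith [hmη m]
  set T : ℕ → Set (Fin g → ℝ) := fun m => ⋃ k ∈ Finset.range (m + 1), stairBox g (η m) k with hT
  have hTm : ∀ m, MeasurableSet (T m) := fun m =>
    Finset.measurableSet_biUnion _ fun k _ => measurableSet_stairBox g (η m) k
  have hvT : ∀ m, volume (T m) = ENNReal.ofReal (((m + 1 : ℕ) : ℝ) * η m ^ g) := fun m => by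
    rw [hT, volume_stairs hgpos (hη m), ENNReal.ofReal_mul (by positivity),
      ENNReal.ofReal_natCast, ENNReal.ofReal_pow (hη m).le]
  have hTU : ∀ m, T m ⊆ U := fun m x hx => by
    apply hrU
    simp only [hT, Set.mem_iUnion, Finset.mem_range] at hx
    obtain ⟨k, hk, hx⟩ := hx
    rw [mem_ball_zero_iff, pi_norm_lt_iff hr]
    intro i
    have hi := hx i (Set.mem_univ _)
    simp only [Set.mem_Ico] at hi
    have h0 : 0 ≤ x i := le_trans (by have := hη m; positivity) hi.1
    rw [Real.norm_of_nonneg h0]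
    have hki : (k : ℝ) * g + i + 1 ≤ (m + 1 : ℕ) * g := by
      have : (k + 1) * g ≤ (m + 1) * g := Nat.mul_le_mul_right _ hk
      have := i.2
      have h4 : k * g + i + 1 ≤ (m + 1) * g := by nlinarith
      exact_mod_cast h4
    have := mul_le_mul_of_nonneg_right hki (hη m).le
    have := hmη m
    linarith
  -- For `g ≥ 2` the measure `(m + 1) η ^ g` is at most `η`.
  have hlim : Filter.Tendsto ((volume.restrict U) ∘ T) Filter.atTop (nhds 0) := by
    have hle : ∀ m, ((volume.restrict U) ∘ T) m ≤ ENNReal.ofReal (η m) := fun m => by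
      refine (Measure.restrict_apply_le _ _).trans ?_
      rw [hvT]
      refine ENNReal.ofReal_le_ofReal ?_
      obtain ⟨d, rfl⟩ : ∃ d, g = d + 2 := ⟨g - 2, by omega⟩
      have h1 : ((m + 1 : ℕ) : ℝ) * η m ≤ 1 := by
        have := hmη m
        have h2 : (1 : ℝ) ≤ ((d + 2 : ℕ) : ℝ) := by push_cast; linarith [d.cast_nonneg (α := ℝ)]
        have h3 : 0 < ((m + 1 : ℕ) : ℝ) * η m := by have := hη m; positivity
        nlinarith
      have h2 : η m ≤ 1 := by
        have : (1 : ℝ) ≤ (m + 1 : ℕ) := by simp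
        nlinarith [hη m]
      calc ((m + 1 : ℕ) : ℝ) * η m ^ (d + 2) = (((m + 1 : ℕ) : ℝ) * η m) * η m * η m ^ d := by ring
        _ ≤ 1 * η m * 1 := by
          have := hη m
          gcongr
          exact pow_le_one₀ this.le h2
        _ = η m := by ring
    have hη0 : Filter.Tendsto η Filter.atTop (nhds 0) := by
      have h := ((tendsto_one_div_add_atTop_nhds_zero_nat (𝕜 := ℝ)).const_mul (ε / g))
      rw [mul_zero] at h
      refine h.congr fun m => ?_
      simp only [hηdef]; push_cast; field_simp
    have h0 : Filter.Tendsto (fun m => ENNReal.ofReal (η m)) Filter.atTop (nhds 0) := by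
      simpa using ENNReal.tendsto_ofReal hη0
    exact tendsto_of_tendsto_of_tendsto_of_le_of_le tendsto_const_nhds h0 (fun _ => zero_le) hle
  have hzero := tendsto_setLIntegral_zero hint.lintegral_lt_top.ne hlim
  have hlow : ∀ m, ENNReal.ofReal (ε / g ^ g) ≤ ∫⁻ x in T m, ENNReal.ofReal
      (∏ i : Fin g, ∏ j ∈ Finset.Ioi i, |x i - x j| ^ (-c)) ∂(volume.restrict U) := fun m => by
    rw [Measure.restrict_restrict_of_subset (hTU m)]
    have hδ : 0 < g * η m := mul_pos hg0 (hη m)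
    calc ENNReal.ofReal (ε / g ^ g)
        = ENNReal.ofReal ((g * η m) ^ (-(g - 1 : ℝ))) * volume (T m) := by
          rw [hvT, ← ENNReal.ofReal_mul (by positivity)]
          congr 1
          have h1 : η m ^ g = (g * η m) ^ (g : ℝ) / g ^ g := by
            rw [Real.rpow_natCast, mul_pow]; field_simp
          have h2 : (g * η m) ^ (-(g - 1 : ℝ)) * (g * η m) ^ (g : ℝ) = g * η m := by
            rw [← Real.rpow_add hδ]; simp
          rw [h1]
          calc ε / g ^ g = ((m + 1 : ℕ) : ℝ) * (g * η m) / g ^ g := by rw [hmη]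
            _ = ((m + 1 : ℕ) : ℝ) * ((g * η m) ^ (-(g - 1 : ℝ)) * (g * η m) ^ (g : ℝ)) / g ^ g := by
              rw [h2]
            _ = _ := by ring
      _ = ∫⁻ _ in T m, ENNReal.ofReal ((g * η m) ^ (-(g - 1 : ℝ))) := by rw [setLIntegral_const]
      _ ≤ _ := by
          refine setLIntegral_mono' (hTm m) fun x hx => ENNReal.ofReal_le_ofReal ?_
          simp only [hT, Set.mem_iUnion] at hx
          obtain ⟨k, -, hx⟩ := hx
          exact rpow_le_of_mem_stairBox hc (hη m) (hgη1 m) hcg hg hx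
  have := ge_of_tendsto' hzero hlow
  have hpos : 0 < ENNReal.ofReal (ε / g ^ g) := ENNReal.ofReal_pos.2 (by positivity)
  exact absurd this (not_le.2 hpos)

/-- Real form of Lemma 3.1 (Mustață): the function
`x ↦ ∏_{i<j} |x_i - x_j|^{-c}` on `ℝ^g` is Lebesgue-integrable near the origin
iff `c < 2/g`. -/
theorem vandermonde_lct_real (g : ℕ) (hg : 2 ≤ g) (c : ℝ) (hc : 0 < c) :
    (∃ U ∈ nhds (0 : Fin g → ℝ), IntegrableOn
        (fun x : Fin g → ℝ => ∏ i : Fin g, ∏ j ∈ Finset.Ioi i, |x i - x j| ^ (-c))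
        U volume) ↔ c < 2 / g := by
  constructor
  · rintro ⟨U, hU, hint⟩
    exact lt_of_integrableOn hg hc hU hint
  · intro h
    obtain ⟨n, rfl⟩ : ∃ n, g = n + 1 := ⟨g - 1, by omega⟩
    refine ⟨Set.univ.pi fun _ => Set.Icc (-1 : ℝ) 1,
      set_pi_mem_nhds Set.finite_univ fun _ _ => Icc_mem_nhds (by simp) (by simp), ?_⟩
    simp only [prod_rpow_eq]
    refine integrableOn_of_lt hc ?_
    rw [lt_div_iff₀ (by positivity)] at h
    push_cast at h
    linarith
end
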